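/- Let j', j'', j be integers and ell', ell'', ellcap, ell odd integers in [t]. Consider the family F of ordered pairs (A,B) of subsets of [t] with |A| = j' < t, |B| = j'' < t, |A intersect B| = j > 0, max{j',j''} < |A union B| < t, q(A - B) = ell', q(B - A) = ell'', q(A intersect B) = ellcap and q(A union B) = ell. Then: (vi) the number of pairs (A,B) in F with {1,t} intersect A = {1,t} and {1,t} intersect B empty is Fr(alpha,alpha;(ell-1)/2,(ell'+1)/2,(ell''-1)/2,(ellcap-1)/2) * c((ell-1)/2; t-(j'+j''-j)) * c((ell'+1)/2; j'-j) * c((ell''-1)/2; j''-j) * c((ellcap-1)/2; j); (vii) the number with {1,t} intersect A = {1,t} and {1,t} intersect B = {t} is Fr(alpha,gamma;(ell-1)/2,(ell'+1)/2,(ell''-1)/2,(ellcap+1)/2) * c((ell-1)/2; t-(j'+j''-j)) * c((ell'+1)/2; j'-j) * c((ell''-1)/2; j''-j) * c((ellcap+1)/2; j); (viii) the number with {1,t} intersect A and {1,t} intersect B both empty is Fr(theta,theta;(ell+1)/2,(ell'-1)/2,(ell''-1)/2,(ellcap-1)/2) * c((ell+1)/2; t-(j'+j''-j)) * c((ell'-1)/2;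 j'-j) * c((ell''-1)/2; j''-j) * c((ellcap-1)/2; j); (ix) the number with {1,t} intersect A empty and {1,t} intersect B = {t} is Fr(theta,beta;(ell+1)/2,(ell'-1)/2,(ell''+1)/2,(ellcap-1)/2) * c((ell+1)/2; t-(j'+j''-j)) * c((ell'-1)/2; j'-j) * c((ell''+1)/2; j''-j) * c((ellcap-1)/2; j); (x) the number with {1,t} intersect A = {1,t} intersect B = {t} is Fr(theta,gamma;(ell+1)/2,(ell'-1)/2,(ell''-1)/2,(ellcap+1)/2) * c((ell+1)/2; t-(j'+j''-j)) * c((ell'-1)/2; j'-j) * c((ell''-1)/2; j''-j) * c((ellcap+1)/2; j). -/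

import Mathlib

open Finset

noncomputable section

/-- Row vectors of `ℝ^t`. -/
abbrev Vec (t : ℕ) := Fin t → ℝ

/-- `T` is a vertex of the discrete hypercube `{1,-1}^t`. -/
def IsPMVertex {t : ℕ} (T : Vec t) : Prop := ∀ i, T i = 1 ∨ T i = -1

/-- `T` is a vertex of the discrete hypercube `{0,1}^t`. -/
def Is01Vertex {t : ℕ} (T : Vec t) : Prop := ∀ i, T i = 0 ∨ T i = 1

open Classical in
/-- Hamming distance between two vectors. -/
def hamming {t : ℕ} (X Y : Vec t) : ℕ :=
  (Finset.univ.filter fun i => X i ≠ Y i).card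

/-- The standard scalar product on `ℝ^t`. -/
def sprod {t : ℕ} (X Y : Vec t) : ℝ := ∑ i, X i * Y i

open Classical in
/-- The cardinality of the negative part `T⁻ = {e : T e = -1}` of `T`. -/
def negCard {t : ℕ} (T : Vec t) : ℕ :=
  (Finset.univ.filter fun i => T i = -1).card

open Classical in
/-- The Hamming weight (number of coordinates equal to `1`) of a `0/1`-vector. -/
def hwt01 {t : ℕ} (T : Vec t) : ℕ :=
  (Finset.univ.filter fun i => T i = 1).card

/-- `D` (read as a `2t`-periodic sequence `D^0, D^1, …`) is a symmetric cycle in the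
hypercube graph `H(t,2)` on the vertex set `{1,-1}^t`: all `D^k` are vertices,
consecutive members are adjacent (Hamming distance `1`), the `2t` members
`D^0, …, D^{2t-1}` are pairwise distinct, and `D^{k+t} = -D^k` for `0 ≤ k ≤ t-1`. -/
structure IsSymCycle (t : ℕ) (D : ℕ → Vec t) : Prop where
  vertex : ∀ k, IsPMVertex (D k)
  periodic : ∀ k, D (k + 2 * t) = D k
  adj : ∀ k, hamming (D k) (D (k + 1)) = 1
  inj : ∀ k l, k < 2 * t → l < 2 * t → D k = D l → k = l
  symm : ∀ k, k ≤ t - 1 → D (k + t) = -(D k)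

/-- `D` is a symmetric cycle in the hypercube graph on the vertex set `{0,1}^t`:
here `D^{k+t} = (1,…,1) - D^k` for `0 ≤ k ≤ t-1`. -/
structure IsSymCycle01 (t : ℕ) (D : ℕ → Vec t) : Prop where
  vertex : ∀ k, Is01Vertex (D k)
  periodic : ∀ k, D (k + 2 * t) = D k
  adj : ∀ k, hamming (D k) (D (k + 1)) = 1
  inj : ∀ k l, k < 2 * t → l < 2 * t → D k = D l → k = l
  symm : ∀ k, k ≤ t - 1 → D (k + t) = (fun _ => 1) - D k

open Classical in
/-- The vertex sequence `V(D) = (D^0, …, D^{2t-1})` of a cycle, as a finset. -/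
def VD (t : ℕ) (D : ℕ → Vec t) : Finset (Vec t) :=
  (Finset.range (2 * t)).image D

/-- `Q` is an inclusion-minimal subset of `V(D)` whose members sum to `T` (in `ℝ^t`). -/
def IsMinDecomp (t : ℕ) (D : ℕ → Vec t) (T : Vec t) (Q : Finset (Vec t)) : Prop :=
  Q ⊆ VD t D ∧ (∑ q ∈ Q, q) = T ∧
    ∀ Q' : Finset (Vec t), Q' ⊆ VD t D → (∑ q ∈ Q', q) = T → ¬Q' ⊂ Q

/-- The vertex `T_S ∈ {1,-1}^t` whose negative part is `S`. -/
def topeOf (t : ℕ) (S : Finset (Fin t)) : Vec t := fun i => if i ∈ S then -1 else 1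

/-- `x` is a coordinate vector of `T` w.r.t. `(D^0, …, D^{t-1})` with all
components in `{-1,0,1}`; by uniqueness this is the vector `x(T,D)`. -/
def IsXVec (t : ℕ) (D : ℕ → Vec t) (T : Vec t) (x : Fin t → ℝ) : Prop :=
  (∀ i, x i = -1 ∨ x i = 0 ∨ x i = 1) ∧ T = ∑ i : Fin t, x i • D (i : ℕ)

open Classical in
/-- The `{0,1}`-decomposition equation
`T = -(|Q|-1)/2 • (1,…,1) + ∑_{q ∈ Q, q ≠ 0} q`. -/
def Decomp01 (t : ℕ) (T : Vec t) (Q : Finset (Vec t)) : Prop :=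
  T = (-(((Q.card : ℝ) - 1) / 2)) • (fun _ => 1 : Vec t) +
    ∑ q ∈ Q.filter (fun q => q ≠ (0 : Vec t)), q

/-- `R^k` for `0 ≤ k ≤ t-1`: the all-ones vector with the first `k` coordinates negated. -/
def Rvec (t : ℕ) (k : ℕ) : Vec t := fun i => if (i : ℕ) < k then -1 else 1

/-- The distinguished symmetric cycle `R` in `H(t,2)`:
`R^0 = (1,…,1)`, `R^s = {}_{-[s]}R^0` for `1 ≤ s ≤ t-1`, and `R^{k+t} = -R^k`. -/
def Rcyc (t : ℕ) (k : ℕ) : Vec t :=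
  if k % (2 * t) < t then Rvec t (k % (2 * t)) else -(Rvec t (k % (2 * t) - t))

/-- `q(A) = ℓ`: an (automatically, the unique) inclusion-minimal subset of `V(R)`
summing to `T_A` has cardinality `ℓ`. -/
def qIs (t : ℕ) (A : Finset (Fin t)) (ℓ : ℕ) : Prop :=
  ∃ Q : Finset (Vec t), IsMinDecomp t (Rcyc t) (topeOf t A) Q ∧ Q.card = ℓ

/-- `c(m;n) = binom(n-1, m-1)`, the number of compositions of `n` into `m` positive
parts (zero whenever `m = 0` or `n ≤ 0`). -/
def comp (m : ℕ) (n : ℤ) : ℕ :=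
  if 1 ≤ m ∧ 1 ≤ n then ((n - 1).toNat).choose (m - 1) else 0

/-- The number of ternary Smirnov words (words with no two equal adjacent letters)
over the alphabet `(θ, α, β) = (0, 1, 2)` with Parikh vector `(k, i, j)`
(that is, `k` letters `θ`, `i` letters `α`, `j` letters `β`), starting with the
letter `s'` and ending with the letter `s''`. -/
def Tm (s' s'' : Fin 3) (k i j : ℕ) : ℕ :=
  Set.ncard { w : List (Fin 3) | List.Chain' (· ≠ ·) w ∧
    w.count 0 = k ∧ w.count 1 = i ∧ w.count 2 = j ∧
    w.head? = some s' ∧ w.getLast? = some s'' }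

/-- The number of Smirnov words over the alphabet `(θ, α, β, γ) = (0, 1, 2, 3)` with
Parikh vector `(k, i, j, h)`, starting with `s'` and ending with `s''`. -/
def Fr (s' s'' : Fin 4) (k i j h : ℕ) : ℕ :=
  Set.ncard { w : List (Fin 4) | List.Chain' (· ≠ ·) w ∧
    w.count 0 = k ∧ w.count 1 = i ∧ w.count 2 = j ∧ w.count 3 = h ∧
    w.head? = some s' ∧ w.getLast? = some s'' }

/-!
The coordinates of `T_A` in the basis `R^0, …, R^(t-1)` of `ℝ^t` lie in `{-1, 0, 1}`, and
`Q(T_A, R)` consists of the signed basis vectors that occur. Hence `q(A)` counts the changes of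
membership in `A` along `1, …, t`, plus one if `1` and `t` are both in `A` or both outside it. Since
`A` and its complement have the same `q`, a pair `(A, B)` can be read as a word over `{θ, α, β, γ}`
whose letters mark the complement of `A ∪ B`, `A - B`, `B - A` and `A ∩ B`; the end letters and the
four values of `q` prescribe the number of maximal runs of each letter. Shrinking every run to one
letter leaves a Smirnov word, and the lengths of the runs of each letter form a composition.
-/

section Cycle

lemma isPMVertex_topeOf {t : ℕ} (A : Finset (Fin t)) : IsPMVertex (topeOf t A) := fun i => by
  by_cases hi : i ∈ A <;> simp [topeOf, hi]

lemma mem_VD_Rcyc {t : ℕ} {v : Vec t} :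
    v ∈ VD t (Rcyc t) ↔ ∃ k : Fin t, v = Rvec t k ∨ v = -Rvec t k := by
  simp only [VD, mem_image, mem_range]
  constructor
  · rintro ⟨k, hk, rfl⟩
    rw [Rcyc, Nat.mod_eq_of_lt hk]
    split_ifs with hkt
    · exact ⟨⟨k, hkt⟩, .inl rfl⟩
    · exact ⟨⟨k - t, by omega⟩, .inr rfl⟩
  · rintro ⟨k, rfl | rfl⟩
    · exact ⟨k, by omega, by rw [Rcyc, Nat.mod_eq_of_lt (by omega), if_pos k.2]⟩
    · refine ⟨k + t, by omega, ?_⟩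
      rw [Rcyc, Nat.mod_eq_of_lt (by omega), if_neg (by omega), Nat.add_sub_cancel]

variable {n : ℕ}

/-- The functionals dual to `R^0, …, R^n`: `cycleCoord k T` is the coefficient of `R^k` in the
expansion of `T` in the basis `R^0, …, R^n` of `ℝ^(n+1)`. -/
def cycleCoord : Fin (n + 1) → Vec (n + 1) →ₗ[ℝ] ℝ :=
  let x (i : Fin (n + 1)) : Vec (n + 1) →ₗ[ℝ] ℝ := LinearMap.proj i
  Fin.cases ((2⁻¹ : ℝ) • (x 0 + x (Fin.last n))) fun i => (2⁻¹ : ℝ) • (x i.succ - x i.castSucc)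

lemma cycleCoord_zero (T : Vec (n + 1)) : cycleCoord 0 T = 2⁻¹ * (T 0 + T (Fin.last n)) := rfl

lemma cycleCoord_succ (i : Fin n) (T : Vec (n + 1)) :
    cycleCoord i.succ T = 2⁻¹ * (T i.succ - T i.castSucc) := rfl

lemma cycleCoord_Rvec (k l : Fin (n + 1)) :
    cycleCoord k (Rvec (n + 1) l) = if k = l then 1 else 0 := by
  induction k using Fin.cases with
  | zero =>
    rcases eq_or_ne 0 l with rfl | hl
    · simp [cycleCoord_zero, Rvec]
      norm_num
    · have : ¬n < (l : ℕ) := by omega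
      simp [cycleCoord_zero, Rvec, hl, Fin.pos_iff_ne_zero.2 hl.symm, this]
  | succ i =>
    simp only [cycleCoord_succ, Rvec, Fin.val_succ, Fin.val_castSucc, Fin.ext_iff]
    split_ifs <;> first | omega | norm_num

lemma eq_of_forall_cycleCoord_eq {S T : Vec (n + 1)} (h : ∀ k, cycleCoord k S = cycleCoord k T) :
    S = T := by
  have hconst (i : Fin (n + 1)) : S i - T i = S 0 - T 0 := by
    induction i using Fin.induction with
    | zero => rfl
    | succ i ih =>
      have := h i.succ
      simp only [cycleCoord_succ] at this
      linarith
  have h0 := h 0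
  simp only [cycleCoord_zero] at h0
  funext i
  linarith [hconst i, hconst (Fin.last n)]

lemma sum_cycleCoord_smul_Rvec (T : Vec (n + 1)) :
    ∑ k, cycleCoord k T • Rvec (n + 1) k = T :=
  eq_of_forall_cycleCoord_eq fun k => by simp [cycleCoord_Rvec]

lemma cycleCoord_eq_neg_one_or_zero_or_one {T : Vec (n + 1)} (hT : IsPMVertex T)
    (k : Fin (n + 1)) :
    cycleCoord k T = -1 ∨ cycleCoord k T = 0 ∨ cycleCoord k T = 1 := by
  induction k using Fin.cases with
  | zero =>
    rcases hT 0 with h | h <;> rcases hT (Fin.last n) with h' | h' <;>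
      norm_num [cycleCoord_zero, h, h']
  | succ i =>
    rcases hT i.succ with h | h <;> rcases hT i.castSucc with h' | h' <;>
      norm_num [cycleCoord_succ, h, h']

open Classical in
lemma cycleCoord_eq_of_mem_VD {q : Vec (n + 1)} (hq : q ∈ VD (n + 1) (Rcyc (n + 1)))
    (k : Fin (n + 1)) :
    cycleCoord k q =
      (if Rvec (n + 1) k = q then 1 else 0) - if -Rvec (n + 1) k = q then 1 else 0 := by
  have hinj (l : Fin (n + 1)) : Rvec (n + 1) k = Rvec (n + 1) l ↔ k = l := by
    refine ⟨fun h => ?_, fun h => h ▸ rfl⟩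
    by_contra hkl
    simpa [cycleCoord_Rvec, hkl] using congrArg (cycleCoord k) h
  have hneg (l : Fin (n + 1)) : Rvec (n + 1) k ≠ -Rvec (n + 1) l := fun h => by
    have := congrArg (cycleCoord k) h
    rw [map_neg, cycleCoord_Rvec, cycleCoord_Rvec, if_pos rfl] at this
    split_ifs at this <;> norm_num at this
  obtain ⟨l, rfl | rfl⟩ := mem_VD_Rcyc.1 hq
  · simp [cycleCoord_Rvec, hinj, neg_eq_iff_eq_neg, hneg]
  · simp [cycleCoord_Rvec, hinj, hneg]

open Classical in
lemma cycleCoord_sum {Q : Finset (Vec (n + 1))} (hQ : Q ⊆ VD (n + 1) (Rcyc (n + 1)))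
    (k : Fin (n + 1)) :
    cycleCoord k (∑ q ∈ Q, q) =
      (if Rvec (n + 1) k ∈ Q then 1 else 0) - if -Rvec (n + 1) k ∈ Q then 1 else 0 := by
  rw [map_sum, sum_congr rfl fun q hq => cycleCoord_eq_of_mem_VD (hQ hq) k, sum_sub_distrib,
    sum_ite_eq, sum_ite_eq]

open Classical in
/-- The set `Q(T,R)` of signed basis vectors occurring in the expansion of the vertex `T` in the
basis `R^0, …, R^n`. -/
def cycleDecomp (T : Vec (n + 1)) : Finset (Vec (n + 1)) :=
  ({k | cycleCoord k T ≠ 0} : Finset (Fin (n + 1))).image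
    fun k => cycleCoord k T • Rvec (n + 1) k

lemma cycleCoord_smul_Rvec_injOn (T : Vec (n + 1)) :
    Set.InjOn (fun k => cycleCoord k T • Rvec (n + 1) k) {k | cycleCoord k T ≠ 0} := by
  intro k hk l _ h
  by_contra hkl
  exact hk (by simpa [cycleCoord_Rvec, hkl] using congrArg (cycleCoord k) h)

open Classical in
lemma card_cycleDecomp (T : Vec (n + 1)) : #(cycleDecomp T) = #{k | cycleCoord k T ≠ 0} :=
  card_image_of_injOn <| by simpa using cycleCoord_smul_Rvec_injOn T

open Classical in
lemma sum_cycleDecomp (T : Vec (n + 1)) : ∑ q ∈ cycleDecomp T, q = T := by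
  rw [cycleDecomp, sum_image (by simpa using cycleCoord_smul_Rvec_injOn T)]
  have hsupp (k : Fin (n + 1)) (hk : cycleCoord k T • Rvec (n + 1) k ≠ 0) : cycleCoord k T ≠ 0 :=
    fun h => hk (by rw [h, zero_smul])
  rw [sum_filter_of_ne fun k _ => hsupp k, sum_cycleCoord_smul_Rvec]

lemma cycleDecomp_subset_VD {T : Vec (n + 1)} (hT : IsPMVertex T) :
    cycleDecomp T ⊆ VD (n + 1) (Rcyc (n + 1)) := fun q hq => by
  simp only [cycleDecomp, mem_image, mem_filter, mem_univ, true_and] at hq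
  obtain ⟨k, hk, rfl⟩ := hq
  rw [mem_VD_Rcyc]
  rcases cycleCoord_eq_neg_one_or_zero_or_one hT k with h | h | h
  · exact ⟨k, .inr (by simp [h])⟩
  · exact absurd h hk
  · exact ⟨k, .inl (by simp [h])⟩

lemma cycleDecomp_subset_of_sum_eq {T : Vec (n + 1)} (hT : IsPMVertex T)
    {Q : Finset (Vec (n + 1))} (hQ : Q ⊆ VD (n + 1) (Rcyc (n + 1))) (hsum : ∑ q ∈ Q, q = T) :
    cycleDecomp T ⊆ Q := fun q hq => by
  simp only [cycleDecomp, mem_image, mem_filter, mem_univ, true_and] at hq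
  obtain ⟨k, hk, rfl⟩ := hq
  have hcoord := cycleCoord_sum hQ k
  rw [hsum] at hcoord
  rcases cycleCoord_eq_neg_one_or_zero_or_one hT k with h | h | h
  · rw [h, neg_one_smul]
    by_contra hnot
    rw [h, if_neg hnot] at hcoord
    split_ifs at hcoord <;> norm_num at hcoord
  · exact absurd h hk
  · rw [h, one_smul]
    by_contra hnot
    rw [h, if_neg hnot] at hcoord
    split_ifs at hcoord <;> norm_num at hcoord

theorem isMinDecomp_Rcyc_iff {T : Vec (n + 1)} (hT : IsPMVertex T) {Q : Finset (Vec (n + 1))} :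
    IsMinDecomp (n + 1) (Rcyc (n + 1)) T Q ↔ Q = cycleDecomp T := by
  constructor
  · rintro ⟨hQ, hsum, hmin⟩
    have hsub := cycleDecomp_subset_of_sum_eq hT hQ hsum
    have hnot := hmin _ (cycleDecomp_subset_VD hT) (sum_cycleDecomp T)
    exact (eq_of_subset_of_not_ssubset hsub hnot).symm
  · rintro rfl
    exact ⟨cycleDecomp_subset_VD hT, sum_cycleDecomp T, fun Q' hQ' hsum hss =>
      hss.2 (cycleDecomp_subset_of_sum_eq hT hQ' hsum)⟩

/-- The positions `i` at which exactly one of two consecutive elements `i, i + 1` of the ground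
set belongs to `A`. -/
def changes (A : Finset (Fin (n + 1))) : Finset (Fin n) := {i | ¬(i.castSucc ∈ A ↔ i.succ ∈ A)}

lemma changes_compl (A : Finset (Fin (n + 1))) : changes Aᶜ = changes A := by
  simp only [changes, mem_compl, not_iff_not]

-- `R` is closed up through `-R^0`, so the coordinate of `R^0` counts the pair of end points of the
-- ground set when `A` does *not* separate them.
theorem qIs_iff (A : Finset (Fin (n + 1))) (ℓ : ℕ) :
    qIs (n + 1) A ℓ ↔ #(changes A) + (if 0 ∈ A ↔ Fin.last n ∈ A then 1 else 0) = ℓ := by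
  classical
  have hzero : cycleCoord 0 (topeOf (n + 1) A) ≠ 0 ↔ (0 ∈ A ↔ Fin.last n ∈ A) := by
    by_cases h : 0 ∈ A <;> by_cases h' : Fin.last n ∈ A <;>
      norm_num [cycleCoord_zero, topeOf, h, h']
  have hsucc (i : Fin n) :
      cycleCoord i.succ (topeOf (n + 1) A) ≠ 0 ↔ ¬(i.castSucc ∈ A ↔ i.succ ∈ A) := by
    by_cases h : i.castSucc ∈ A <;> by_cases h' : i.succ ∈ A <;>
      norm_num [cycleCoord_succ, topeOf, h, h']
  have hcard : #(cycleDecomp (topeOf (n + 1) A)) =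
      #(changes A) + if 0 ∈ A ↔ Fin.last n ∈ A then 1 else 0 := by
    rw [card_cycleDecomp, Fin.card_filter_univ_succ', add_comm]
    simp only [hzero, hsucc, changes]
  simp only [qIs, isMinDecomp_Rcyc_iff (isPMVertex_topeOf A), exists_eq_left, hcard]

lemma qIs_compl (A : Finset (Fin (n + 1))) (ℓ : ℕ) : qIs (n + 1) Aᶜ ℓ ↔ qIs (n + 1) A ℓ := by
  simp only [qIs_iff, changes_compl, mem_compl, not_iff_not]

end Cycle

section Compositions

/-- The number of compositions of `n` into `m` positive parts, computed by cases on whether the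
first part is `1`. It differs from `comp m n` only in counting the empty composition of `0`. -/
def compositionCount : ℕ → ℕ → ℕ
  | 0, 0 => 1
  | 0, _ + 1 => 0
  | _ + 1, 0 => 0
  | m + 1, n + 1 => compositionCount (m + 1) n + compositionCount m n

lemma compositionCount_succ_succ (m n : ℕ) : compositionCount (m + 1) (n + 1) = n.choose m := by
  induction n generalizing m with
  | zero => cases m <;> simp [compositionCount]
  | succ n ih =>
    cases m with
    | zero =>
      rw [compositionCount, ih]
      simp [compositionCount]
    | succ m => rw [compositionCount, ih, ih, Nat.choose_succ_succ, add_comm]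

lemma comp_natCast (m : ℕ) {n : ℕ} (hn : n ≠ 0) : comp m n = compositionCount m n := by
  obtain ⟨n, rfl⟩ := Nat.exists_eq_succ_of_ne_zero hn
  cases m with
  | zero => simp [comp, compositionCount]
  | succ m => simp [comp, compositionCount_succ_succ]

end Compositions

section Words

variable {α : Type*}

lemma head?_destutter (R : α → α → Prop) [DecidableRel R] (w : List α) :
    (w.destutter R).head? = w.head? := by
  have hhead (a : α) (l : List α) : (l.destutter' R a).head? = some a := by
    induction l with
    | nil => rfl
    | cons b l ih =>
      rw [List.destutter'_cons]
      split_ifs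
      · rfl
      · exact ih
  cases w with
  | nil => rfl
  | cons a l => exact hhead a l

lemma head?_ofFn {n : ℕ} (f : Fin (n + 1) → α) : (List.ofFn f).head? = some (f 0) := by
  rw [List.ofFn_succ, List.head?_cons]

lemma getLast?_ofFn {n : ℕ} (f : Fin (n + 1) → α) :
    (List.ofFn f).getLast? = some (f (Fin.last n)) := by
  rw [List.ofFn_succ_last, List.getLast?_concat]

variable [DecidableEq α]

lemma count_ofFn {n : ℕ} (f : Fin n → α) (a : α) : (List.ofFn f).count a = #{i | f i = a} := by
  rw [← Multiset.coe_count, ← Fin.univ_val_map, Multiset.count_map, card_def, filter_val]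
  simp only [eq_comm]

/-- The Smirnov word obtained from `w` by shrinking every maximal run of equal letters to a
single letter. -/
def runWord (w : List α) : List α := w.destutter (· ≠ ·)

lemma isChain_runWord (w : List α) : (runWord w).IsChain (· ≠ ·) := w.isChain_destutter (· ≠ ·)

lemma runWord_subset (w : List α) : runWord w ⊆ w := (w.destutter_sublist (· ≠ ·)).subset

lemma runWord_eq_nil {w : List α} : runWord w = [] ↔ w = [] := List.destutter_eq_nil (· ≠ ·)

lemma head?_runWord (w : List α) : (runWord w).head? = w.head? := head?_destutter (· ≠ ·) w

lemma runWord_cons (a : α) (l : List α) :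
    runWord (a :: l) = if l.head? = some a then runWord l else a :: runWord l := by
  cases l with
  | nil => rfl
  | cons b l =>
    simp only [runWord, List.destutter_cons_cons]
    rcases eq_or_ne a b with rfl | hab
    · simp [List.destutter_cons']
    · simp [List.destutter_cons', hab, hab.symm]

lemma getLast?_runWord (w : List α) : (runWord w).getLast? = w.getLast? := by
  induction w with
  | nil => rfl
  | cons a l ih =>
    rw [runWord_cons]
    split_ifs with h
    · obtain ⟨l, rfl⟩ := List.head?_eq_some_iff.1 h
      rw [ih, List.getLast?_cons_cons]
    · rw [List.getLast?_cons, List.getLast?_cons, ih]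

/-- The words with word of runs `u` and multiset of letters `s`. -/
def runFiber (u : List α) (s : Multiset α) : Set (List α) := {w | runWord w = u ∧ w = s}

lemma finite_runFiber (u : List α) (s : Multiset α) : (runFiber u s).Finite :=
  s.lists.finite_toSet.subset fun _ hw => (Multiset.mem_lists_iff s _).2 hw.2.symm

lemma runFiber_nil_zero : runFiber ([] : List α) 0 = {[]} := by
  ext w
  simp [runFiber, runWord_eq_nil]

lemma runFiber_nil_of_ne_zero {s : Multiset α} (hs : s ≠ 0) : runFiber [] s = ∅ := by
  refine Set.eq_empty_of_forall_notMem fun w ⟨hw, hws⟩ => hs ?_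
  rw [← hws, runWord_eq_nil.1 hw, Multiset.coe_nil]

lemma runFiber_cons_of_notMem {a : α} {s : Multiset α} (ha : a ∉ s) (v : List α) :
    runFiber (a :: v) s = ∅ := by
  refine Set.eq_empty_of_forall_notMem fun w ⟨hw, hws⟩ => ha ?_
  have haw : a ∈ w := runWord_subset w (hw ▸ List.mem_cons_self)
  exact hws ▸ Multiset.mem_coe.2 haw

lemma runFiber_cons_cons {a : α} {v : List α} (hv : v.head? ≠ some a) (s : Multiset α) :
    runFiber (a :: v) (a ::ₘ s) = List.cons a '' (runFiber (a :: v) s ∪ runFiber v s) := by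
  ext w
  constructor
  · rintro ⟨hw, hws⟩
    have hhead : w.head? = some a := by rw [← head?_runWord, hw, List.head?_cons]
    obtain ⟨l, rfl⟩ := List.head?_eq_some_iff.1 hhead
    have hls : (l : Multiset α) = s := by rwa [← Multiset.cons_coe, Multiset.cons_inj_right] at hws
    refine ⟨l, ?_, rfl⟩
    rw [runWord_cons] at hw
    split_ifs at hw
    · exact .inl ⟨hw, hls⟩
    · exact .inr ⟨(List.cons.inj hw).2, hls⟩
  · rintro ⟨l, ⟨hl, rfl⟩ | ⟨hl, rfl⟩, rfl⟩ <;>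
      refine ⟨?_, (Multiset.cons_coe a l).symm⟩ <;>
      rw [runWord_cons, ← head?_runWord l, hl]
    · rw [List.head?_cons, if_pos rfl]
    · rw [if_neg hv]

lemma disjoint_runFiber {u v : List α} (huv : u ≠ v) (s : Multiset α) :
    Disjoint (runFiber u s) (runFiber v s) :=
  Set.disjoint_left.2 fun _ hu hv => huv (hu.1.symm.trans hv.1)

/-- The Smirnov words that start with `s'`, end with `s''` and contain each letter `a` exactly
`m a` times; `Fr` is their number over the alphabet `Fin 4`. -/
def smirnovWords (s' s'' : α) (m : α → ℕ) : Set (List α) :=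
  {u | u.IsChain (· ≠ ·) ∧ (∀ a, u.count a = m a) ∧
    u.head? = some s' ∧ u.getLast? = some s''}

lemma runWord_mem_smirnovWords {s' s'' : α} {m : α → ℕ} {w : List α} :
    runWord w ∈ smirnovWords s' s'' m ↔
      (∀ a, (runWord w).count a = m a) ∧ w.head? = some s' ∧ w.getLast? = some s'' := by
  simp only [smirnovWords, Set.mem_ofPred_eq, isChain_runWord, true_and, head?_runWord,
    getLast?_runWord]

lemma finite_smirnovWords [Finite α] (s' s'' : α) (m : α → ℕ) :
    (smirnovWords s' s'' m).Finite := by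
  have := Fintype.ofFinite α
  refine (List.finite_length_eq α (∑ a, m a)).subset fun u hu => ?_
  rw [Set.mem_ofPred_eq, ← Multiset.coe_card, ← Multiset.sum_count_eq_card fun a _ => mem_univ a]
  simp only [Multiset.coe_count, hu.2.1]

/-- The number of maximal runs of the letter `a` in the word `f`. -/
def runCount {n : ℕ} (f : Fin n → α) (a : α) : ℕ := (runWord (List.ofFn f)).count a

variable [Fintype α]

lemma prod_compositionCount_cons (a : α) (v : List α) (s : Multiset α) :
    ∏ b, compositionCount ((a :: v).count b) ((a ::ₘ s).count b) =
      ∏ b, compositionCount ((a :: v).count b) (s.count b) +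
        ∏ b, compositionCount (v.count b) (s.count b) := by
  refine (prod_add_prod_eq (mem_univ a) ?_ ?_ ?_).symm
  · simp [compositionCount]
  · intro b _ hb
    rw [Multiset.count_cons_of_ne hb]
  · intro b _ hb
    rw [Multiset.count_cons_of_ne hb, List.count_cons_of_ne hb.symm]

theorem ncard_runFiber {u : List α} (hu : u.IsChain (· ≠ ·)) (s : Multiset α) :
    (runFiber u s).ncard = ∏ a, compositionCount (u.count a) (s.count a) := by
  induction s using Multiset.strongInductionOn generalizing u with
  | ih s ih =>
  rcases u with _ | ⟨a, v⟩
  · rcases eq_or_ne s 0 with rfl | hs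
    · simp [runFiber_nil_zero, compositionCount]
    · obtain ⟨a, ha⟩ := Multiset.exists_mem_of_ne_zero hs
      obtain ⟨k, hk⟩ := Nat.exists_eq_succ_of_ne_zero (Multiset.count_ne_zero.2 ha)
      rw [runFiber_nil_of_ne_zero hs, Set.ncard_empty, prod_eq_zero (mem_univ a)]
      rw [hk, List.count_nil, compositionCount]
  · by_cases ha : a ∈ s
    · obtain ⟨s, rfl⟩ := Multiset.exists_cons_of_mem ha
      have hlt : s < a ::ₘ s := Multiset.lt_cons_self s a
      obtain ⟨hne, htail⟩ := List.isChain_cons.1 hu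
      have hv : v.head? ≠ some a := fun h => hne a h rfl
      rw [runFiber_cons_cons hv, Set.ncard_image_of_injective _ List.cons_injective,
        Set.ncard_union_eq (disjoint_runFiber (List.cons_ne_self a v) s) (finite_runFiber _ s)
          (finite_runFiber _ s), ih s hlt hu, ih s hlt htail, prod_compositionCount_cons]
    · rw [runFiber_cons_of_notMem ha, Set.ncard_empty, prod_eq_zero (mem_univ a)]
      rw [Multiset.count_eq_zero_of_notMem ha, List.count_cons_self, compositionCount]

lemma forall_fin_four {P : Fin 4 → Prop} : (∀ a, P a) ↔ P 0 ∧ P 1 ∧ P 2 ∧ P 3 := by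
  simp [Fin.forall_fin_succ]

lemma Fr_eq_ncard_smirnovWords (s' s'' : Fin 4) (m : Fin 4 → ℕ) :
    Fr s' s'' (m 0) (m 1) (m 2) (m 3) = (smirnovWords s' s'' m).ncard := by
  refine congrArg Set.ncard (Set.ext fun w => ?_)
  change w.IsChain (· ≠ ·) ∧ _ ↔ _
  simp only [smirnovWords, forall_fin_four, Set.mem_ofPred_eq, and_assoc]

theorem ncard_setOf_runWord_mem_smirnovWords (s' s'' : α) (m : α → ℕ) (s : Multiset α) :
    {w : List α | runWord w ∈ smirnovWords s' s'' m ∧ w = s}.ncard =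
      (smirnovWords s' s'' m).ncard * ∏ a, compositionCount (m a) (s.count a) := by
  have hunion : {w : List α | runWord w ∈ smirnovWords s' s'' m ∧ w = s} =
      ⋃ u ∈ smirnovWords s' s'' m, runFiber u s := by
    ext w
    simp [runFiber]
  have hfiber (u : List α) (hu : u ∈ smirnovWords s' s'' m) :
      (runFiber u s).ncard = ∏ a, compositionCount (m a) (s.count a) := by
    simp only [ncard_runFiber hu.1, hu.2.1]
  rw [hunion, (finite_smirnovWords s' s'' m).ncard_biUnion (fun u _ => finite_runFiber u s)
    fun u _ v _ huv => disjoint_runFiber huv s, finsum_mem_congr rfl hfiber,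
    finsum_mem_eq_finite_toFinset_sum _ (finite_smirnovWords s' s'' m), sum_const,
    ← Set.ncard_eq_toFinset_card _ (finite_smirnovWords s' s'' m), smul_eq_mul]

theorem ncard_setOf_runCount_eq {n : ℕ} (s' s'' : α) (m : α → ℕ) {c : α → ℕ}
    (hc : ∑ a, c a = n + 1) :
    {f : Fin (n + 1) → α | (f 0 = s' ∧ f (Fin.last n) = s'') ∧
        ∀ a, #{i | f i = a} = c a ∧ runCount f a = m a}.ncard =
      (smirnovWords s' s'' m).ncard * ∏ a, compositionCount (m a) (c a) := by
  let s : Multiset α := ∑ a, Multiset.replicate (c a) a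
  have hs (a : α) : s.count a = c a := by
    simp [s, Multiset.count_sum', Multiset.count_replicate]
  have hpre : {f : Fin (n + 1) → α | (f 0 = s' ∧ f (Fin.last n) = s'') ∧
        ∀ a, #{i | f i = a} = c a ∧ runCount f a = m a} =
      List.ofFn ⁻¹' {w | runWord w ∈ smirnovWords s' s'' m ∧ w = s} := by
    ext f
    simp only [Set.mem_preimage, Set.mem_ofPred_eq, runWord_mem_smirnovWords, Multiset.ext,
      Multiset.coe_count, count_ofFn, hs, head?_ofFn, getLast?_ofFn, Option.some_inj, forall_and,
      runCount]
    tauto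
  have hrange : {w : List α | runWord w ∈ smirnovWords s' s'' m ∧ w = s} ⊆
      Set.range (List.ofFn (n := n + 1)) := fun w hw => by
    have hlen : w.length = n + 1 := by
      rw [← Multiset.coe_card, hw.2, Multiset.card_sum]
      simpa using hc
    exact ⟨fun i => w[i], List.ext_getElem (by simp [hlen]) fun i _ _ => List.getElem_ofFn _⟩
  rw [hpre, Set.ncard_preimage_of_injective_subset_range List.ofFn_injective hrange,
    ncard_setOf_runWord_mem_smirnovWords]
  simp only [hs]

end Words

section Runs

variable {α : Type*} [DecidableEq α] {n : ℕ}

lemma runCount_succ (f : Fin (n + 2) → α) (a : α) :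
    runCount f a = (if f 0 = a ∧ f 1 ≠ a then 1 else 0) + runCount (fun i => f i.succ) a := by
  rw [runCount, List.ofFn_succ, runWord_cons, head?_ofFn, Fin.succ_zero_eq_one]
  simp only [Option.some_inj]
  split_ifs with h₁ h₂ h₂
  · exact absurd (h₁.trans h₂.1) h₂.2
  · rw [runCount, zero_add]
  · rw [List.count_cons, if_pos (by simpa using h₂.1), add_comm, runCount]
  · rw [List.count_cons_of_ne fun h => h₂ ⟨h, fun h' => h₁ (h'.trans h.symm)⟩, runCount, zero_add]

lemma card_changes_succ (A : Finset (Fin (n + 2))) :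
    #(changes A) = (if 0 ∈ A ↔ 1 ∈ A then 0 else 1) +
      #(changes ({i | i.succ ∈ A} : Finset (Fin (n + 1)))) := by
  rw [changes, Fin.card_filter_univ_succ']
  by_cases h : 0 ∈ A ↔ 1 ∈ A <;> simp [changes, h]

-- Each maximal run of `a` contributes its two ends, and the ends interior to `f` are the changes.
theorem card_changes_add_ends (f : Fin (n + 1) → α) (a : α) :
    #(changes {i | f i = a}) + (if f 0 = a then 1 else 0) + (if f (Fin.last n) = a then 1 else 0) =
      2 * runCount f a := by
  induction n with
  | zero =>
    by_cases h : f 0 = a <;> simp [changes, runCount, runWord, h]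
  | succ n ih =>
    have ih : #(changes {i | f i.succ = a}) + (if f 1 = a then 1 else 0) +
        (if f (Fin.last (n + 1)) = a then 1 else 0) = 2 * runCount (fun i => f i.succ) a :=
      ih fun i => f i.succ
    rw [runCount_succ, card_changes_succ]
    simp only [mem_filter, mem_univ, true_and]
    have hfirst : (if f 0 = a ↔ f 1 = a then 0 else 1) + (if f 0 = a then 1 else 0) =
        2 * (if f 0 = a ∧ f 1 ≠ a then 1 else 0) + if f 1 = a then 1 else 0 := by
      by_cases h₀ : f 0 = a <;> by_cases h₁ : f 1 = a <;> simp [h₀, h₁]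
    omega

/-- The number of maximal runs of the letter `a` that a word from `s'` to `s''` must have for its
positions occupied by `a` to form a set `A` with `q(A) = ℓ`, where `ℓ` is odd. -/
def runsOfQ (s' s'' a : α) (ℓ : ℕ) : ℕ := if s' = a ∨ s'' = a then (ℓ + 1) / 2 else (ℓ - 1) / 2

theorem qIs_filter_eq_iff (f : Fin (n + 1) → α) (a : α) {ℓ : ℕ} (hℓ : Odd ℓ) :
    qIs (n + 1) {i | f i = a} ℓ ↔ runCount f a = runsOfQ (f 0) (f (Fin.last n)) a ℓ := by
  have hends := card_changes_add_ends f a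
  obtain ⟨k, rfl⟩ := hℓ
  simp only [qIs_iff, mem_filter, mem_univ, true_and, runsOfQ]
  split_ifs at hends ⊢ <;> first | omega | tauto

theorem ncard_setOf_qIs [Fintype α] (s' s'' : α) {L : α → ℕ} (hL : ∀ a, Odd (L a)) {c : α → ℤ}
    (hc : ∑ a, c a = n + 1) :
    {f : Fin (n + 1) → α | (f 0 = s' ∧ f (Fin.last n) = s'') ∧
        (∀ a, 0 < c a ∧ #{i | f i = a} = c a) ∧ ∀ a, qIs (n + 1) {i | f i = a} (L a)}.ncard =
      (smirnovWords s' s'' fun a => runsOfQ s' s'' a (L a)).ncard *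
        ∏ a, comp (runsOfQ s' s'' a (L a)) (c a) := by
  by_cases hpos : ∀ a, 0 < c a
  · lift c to α → ℕ using fun a => (hpos a).le
    beta_reduce at hc hpos
    norm_cast at hc hpos
    simp only [comp_natCast _ (hpos _).ne']
    rw [← ncard_setOf_runCount_eq s' s'' _ hc]
    refine congrArg Set.ncard (Set.ext fun f => and_congr_right ?_)
    rintro ⟨rfl, rfl⟩
    simp [qIs_filter_eq_iff f _ (hL _), hpos, forall_and]
  · obtain ⟨a, ha⟩ := not_forall.1 hpos
    rw [prod_eq_zero (mem_univ a) (if_neg (by omega)), mul_zero, Set.ncard_eq_zero]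
    exact Set.eq_empty_of_forall_notMem fun f hf => ha (hf.2.1 a).1

end Runs

section Pairs

variable {ι : Type*} [DecidableEq ι]

/-- The letter recording the membership of `i` in a pair of sets, with `θ = 0` for neither set,
`α = 1` for the first only, `β = 2` for the second only and `γ = 3` for both. -/
def letterOf (p : Finset ι × Finset ι) (i : ι) : Fin 4 :=
  if i ∈ p.1 then if i ∈ p.2 then 3 else 1 else if i ∈ p.2 then 2 else 0

lemma letterOf_eq_zero {p : Finset ι × Finset ι} {i : ι} :
    letterOf p i = 0 ↔ i ∉ p.1 ∧ i ∉ p.2 := by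
  unfold letterOf
  split_ifs <;> simp [*]

lemma letterOf_eq_one {p : Finset ι × Finset ι} {i : ι} :
    letterOf p i = 1 ↔ i ∈ p.1 ∧ i ∉ p.2 := by
  unfold letterOf
  split_ifs <;> simp [*]

lemma letterOf_eq_two {p : Finset ι × Finset ι} {i : ι} :
    letterOf p i = 2 ↔ i ∉ p.1 ∧ i ∈ p.2 := by
  unfold letterOf
  split_ifs <;> simp [*]

lemma letterOf_eq_three {p : Finset ι × Finset ι} {i : ι} :
    letterOf p i = 3 ↔ i ∈ p.1 ∧ i ∈ p.2 := by
  unfold letterOf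
  split_ifs <;> simp [*]

lemma letterOf_bijective [Finite ι] :
    Function.Bijective (letterOf : Finset ι × Finset ι → ι → Fin 4) := by
  have := Fintype.ofFinite ι
  constructor
  · intro p r h
    have hmem (i : ι) : (i ∈ p.1 ↔ i ∈ r.1) ∧ (i ∈ p.2 ↔ i ∈ r.2) := by
      have := congrFun h i
      unfold letterOf at this
      split_ifs at this <;> simp_all
    exact Prod.ext (Finset.ext fun i => (hmem i).1) (Finset.ext fun i => (hmem i).2)
  · intro f
    refine ⟨(univ.filter fun i => f i = 1 ∨ f i = 3, univ.filter fun i => f i = 2 ∨ f i = 3),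
      funext fun i => ?_⟩
    simp only [letterOf, mem_filter, mem_univ, true_and]
    generalize f i = a
    revert a
    decide

variable [Fintype ι]

lemma filter_letterOf_eq_zero (p : Finset ι × Finset ι) :
    ({i | letterOf p i = 0} : Finset ι) = (p.1 ∪ p.2)ᶜ := by
  ext
  simp [letterOf_eq_zero]

lemma filter_letterOf_eq_one (p : Finset ι × Finset ι) :
    ({i | letterOf p i = 1} : Finset ι) = p.1 \ p.2 := by
  ext
  simp [letterOf_eq_one]

lemma filter_letterOf_eq_two (p : Finset ι × Finset ι) :
    ({i | letterOf p i = 2} : Finset ι) = p.2 \ p.1 := by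
  ext
  simp [letterOf_eq_two, and_comm]

lemma filter_letterOf_eq_three (p : Finset ι × Finset ι) :
    ({i | letterOf p i = 3} : Finset ι) = p.1 ∩ p.2 := by
  ext
  simp [letterOf_eq_three]

/-- The numbers of positions carrying the letters `θ, α, β, γ` in the word of a pair of subsets of
`[t]` with `j'` and `j''` elements, `j` of them in common. -/
def letterCount (t j' j'' j : ℕ) : Fin 4 → ℤ := ![t - (j' + j'' - j), j' - j, j'' - j, j]

lemma forall_card_filter_letterOf_iff (p : Finset ι × Finset ι) {t j' j'' j : ℕ}
    (ht : Fintype.card ι = t) :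
    (∀ a, 0 < letterCount t j' j'' j a ∧ #{i | letterOf p i = a} = letterCount t j' j'' j a) ↔
      p.1.card = j' ∧ j' < t ∧ p.2.card = j'' ∧ j'' < t ∧ (p.1 ∩ p.2).card = j ∧ 0 < j ∧
        j' < (p.1 ∪ p.2).card ∧ j'' < (p.1 ∪ p.2).card ∧ (p.1 ∪ p.2).card < t := by
  have h₀ := card_add_card_compl (p.1 ∪ p.2)
  have h₁ := card_sdiff_add_card_inter p.1 p.2
  have h₂ := card_sdiff_add_card_inter p.2 p.1
  have h₃ := card_union_add_card_inter p.1 p.2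
  rw [inter_comm] at h₂
  simp only [forall_fin_four, letterCount, filter_letterOf_eq_zero, filter_letterOf_eq_one,
    filter_letterOf_eq_two, filter_letterOf_eq_three, Matrix.cons_val]
  omega

end Pairs

section Traces

variable {ι : Type*} [DecidableEq ι] {a b : ι}

lemma pair_inter_eq_pair_iff {A : Finset ι} : {a, b} ∩ A = {a, b} ↔ a ∈ A ∧ b ∈ A := by
  rw [inter_eq_left, insert_subset_iff, singleton_subset_iff]

lemma pair_inter_eq_empty_iff {A : Finset ι} : {a, b} ∩ A = ∅ ↔ a ∉ A ∧ b ∉ A := by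
  rw [← disjoint_iff_inter_eq_empty, disjoint_insert_left, disjoint_singleton_left]

lemma pair_inter_eq_singleton_iff (hab : a ≠ b) {A : Finset ι} :
    {a, b} ∩ A = {b} ↔ a ∉ A ∧ b ∈ A := by
  by_cases ha : a ∈ A <;> by_cases hb : b ∈ A <;> simp [ha, hb, hab]

end Traces

section Families

variable {n : ℕ}

lemma forall_qIs_filter_letterOf_iff (p : Finset (Fin (n + 1)) × Finset (Fin (n + 1)))
    (ℓ ℓ' ℓ'' ℓcap : ℕ) :
    (∀ a, qIs (n + 1) {i | letterOf p i = a} (![ℓ, ℓ', ℓ'', ℓcap] a)) ↔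
      qIs (n + 1) (p.1 ∪ p.2) ℓ ∧ qIs (n + 1) (p.1 \ p.2) ℓ' ∧ qIs (n + 1) (p.2 \ p.1) ℓ'' ∧
        qIs (n + 1) (p.1 ∩ p.2) ℓcap := by
  simp only [forall_fin_four, filter_letterOf_eq_zero, filter_letterOf_eq_one,
    filter_letterOf_eq_two, filter_letterOf_eq_three, qIs_compl, Matrix.cons_val]

theorem ncard_setOf_pair_eq_Fr_mul_comp (s' s'' : Fin 4) {j' j'' j ℓ' ℓ'' ℓcap ℓ : ℕ} (hℓ' : Odd ℓ')
    (hℓ'' : Odd ℓ'') (hℓcap : Odd ℓcap) (hℓ : Odd ℓ)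
    {P : Finset (Fin (n + 1)) × Finset (Fin (n + 1)) → Prop}
    (hP : ∀ p, P p ↔ letterOf p 0 = s' ∧ letterOf p (Fin.last n) = s'') :
    {p : Finset (Fin (n + 1)) × Finset (Fin (n + 1)) | p.1.card = j' ∧ j' < n + 1 ∧
        p.2.card = j'' ∧ j'' < n + 1 ∧ (p.1 ∩ p.2).card = j ∧ 0 < j ∧ j' < (p.1 ∪ p.2).card ∧
        j'' < (p.1 ∪ p.2).card ∧ (p.1 ∪ p.2).card < n + 1 ∧ qIs (n + 1) (p.1 \ p.2) ℓ' ∧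
        qIs (n + 1) (p.2 \ p.1) ℓ'' ∧ qIs (n + 1) (p.1 ∩ p.2) ℓcap ∧
        qIs (n + 1) (p.1 ∪ p.2) ℓ ∧ P p}.ncard =
      Fr s' s'' (runsOfQ s' s'' 0 ℓ) (runsOfQ s' s'' 1 ℓ') (runsOfQ s' s'' 2 ℓ'')
          (runsOfQ s' s'' 3 ℓcap) *
        comp (runsOfQ s' s'' 0 ℓ) (((n + 1 : ℕ) : ℤ) - ((j' : ℤ) + (j'' : ℤ) - (j : ℤ))) *
        comp (runsOfQ s' s'' 1 ℓ') ((j' : ℤ) - (j : ℤ)) *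
        comp (runsOfQ s' s'' 2 ℓ'') ((j'' : ℤ) - (j : ℤ)) *
        comp (runsOfQ s' s'' 3 ℓcap) (j : ℤ) := by
  let L : Fin 4 → ℕ := ![ℓ, ℓ', ℓ'', ℓcap]
  have hL : ∀ a, Odd (L a) := forall_fin_four.2 ⟨hℓ, hℓ', hℓ'', hℓcap⟩
  have hsum : ∑ a, letterCount (n + 1) j' j'' j a = n + 1 := by
    simp only [Fin.sum_univ_four, letterCount, Matrix.cons_val]
    push_cast
    ring
  calc
    _ = (letterOf ⁻¹' {f : Fin (n + 1) → Fin 4 | (f 0 = s' ∧ f (Fin.last n) = s'') ∧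
          (∀ a, 0 < letterCount (n + 1) j' j'' j a ∧
            #{i | f i = a} = letterCount (n + 1) j' j'' j a) ∧
          ∀ a, qIs (n + 1) {i | f i = a} (L a)}).ncard := by
      refine congrArg Set.ncard (Set.ext fun p => ?_)
      simp only [Set.mem_preimage, Set.mem_ofPred_eq, hP, L, forall_qIs_filter_letterOf_iff,
        forall_card_filter_letterOf_iff p (Fintype.card_fin (n + 1))]
      tauto
    _ = (smirnovWords s' s'' fun a => runsOfQ s' s'' a (L a)).ncard *
          ∏ a, comp (runsOfQ s' s'' a (L a)) (letterCount (n + 1) j' j'' j a) := by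
      rw [Set.ncard_preimage_of_injective_subset_range letterOf_bijective.injective
        (by simp [letterOf_bijective.surjective.range_eq]), ncard_setOf_qIs s' s'' hL hsum]
    _ = _ := by
      rw [← Fr_eq_ncard_smirnovWords, Fin.prod_univ_four]
      simp only [L, letterCount, Matrix.cons_val, mul_assoc]

end Families

/-- cases (vi)–(x): counts of ordered two-member intersecting Sperner families
not covering `[t]`, refined by `q(A-B)`, `q(B-A)`, `q(A∩B)`, `q(A∪B)` and traces on `{1,t}`. -/
theorem stmt17 (t j' j'' j ℓ' ℓ'' ℓcap ℓ : ℕ) (ht : 3 ≤ t)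
    (hodd' : Odd ℓ') (hle' : ℓ' ≤ t) (hodd'' : Odd ℓ'') (hle'' : ℓ'' ≤ t)
    (hoddc : Odd ℓcap) (hlec : ℓcap ≤ t) (hoddl : Odd ℓ) (hlel : ℓ ≤ t)
    (S1 S2 S3 S4 S5 : Set (Finset (Fin t) × Finset (Fin t)))
    (hS1 : S1 = { p : Finset (Fin t) × Finset (Fin t) | p.1.card = j' ∧ j' < t ∧ p.2.card = j'' ∧ j'' < t ∧ (p.1 ∩ p.2).card = j ∧ 0 < j ∧ j' < (p.1 ∪ p.2).card ∧ j'' < (p.1 ∪ p.2).card ∧ (p.1 ∪ p.2).card < t ∧ qIs t (p.1 \ p.2) ℓ' ∧ qIs t (p.2 \ p.1) ℓ'' ∧ qIs t (p.1 ∩ p.2) ℓcap ∧ qIs t (p.1 ∪ p.2) ℓ ∧ ({⟨0, by omega⟩, ⟨t - 1, by omega⟩} : Finset (Fin t)) ∩ p.1 = ({⟨0, by omega⟩, ⟨t - 1, by omega⟩} : Finset (Fin t)) ∧ ({⟨0, by omega⟩, ⟨t - 1, by omega⟩} : Finset (Fin t)) ∩ p.2 = ∅ })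
    (hS2 : S2 = { p : Finset (Fin t) × Finset (Fin t) | p.1.card = j' ∧ j' < t ∧ p.2.card = j'' ∧ j'' < t ∧ (p.1 ∩ p.2).card = j ∧ 0 < j ∧ j' < (p.1 ∪ p.2).card ∧ j'' < (p.1 ∪ p.2).card ∧ (p.1 ∪ p.2).card < t ∧ qIs t (p.1 \ p.2) ℓ' ∧ qIs t (p.2 \ p.1) ℓ'' ∧ qIs t (p.1 ∩ p.2) ℓcap ∧ qIs t (p.1 ∪ p.2) ℓ ∧ ({⟨0, by omega⟩, ⟨t - 1, by omega⟩} : Finset (Fin t)) ∩ p.1 = ({⟨0, by omega⟩, ⟨t - 1, by omega⟩} : Finset (Fin t)) ∧ ({⟨0, by omega⟩, ⟨t - 1, by omega⟩} : Finset (Fin t)) ∩ p.2 = ({⟨t - 1, by omega⟩} : Finset (Fin t)) })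
    (hS3 : S3 = { p : Finset (Fin t) × Finset (Fin t) | p.1.card = j' ∧ j' < t ∧ p.2.card = j'' ∧ j'' < t ∧ (p.1 ∩ p.2).card = j ∧ 0 < j ∧ j' < (p.1 ∪ p.2).card ∧ j'' < (p.1 ∪ p.2).card ∧ (p.1 ∪ p.2).card < t ∧ qIs t (p.1 \ p.2) ℓ' ∧ qIs t (p.2 \ p.1) ℓ'' ∧ qIs t (p.1 ∩ p.2) ℓcap ∧ qIs t (p.1 ∪ p.2) ℓ ∧ ({⟨0, by omega⟩, ⟨t - 1, by omega⟩} : Finset (Fin t)) ∩ p.1 = ∅ ∧ ({⟨0, by omega⟩, ⟨t - 1, by omega⟩} : Finset (Fin t)) ∩ p.2 = ∅ })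
    (hS4 : S4 = { p : Finset (Fin t) × Finset (Fin t) | p.1.card = j' ∧ j' < t ∧ p.2.card = j'' ∧ j'' < t ∧ (p.1 ∩ p.2).card = j ∧ 0 < j ∧ j' < (p.1 ∪ p.2).card ∧ j'' < (p.1 ∪ p.2).card ∧ (p.1 ∪ p.2).card < t ∧ qIs t (p.1 \ p.2) ℓ' ∧ qIs t (p.2 \ p.1) ℓ'' ∧ qIs t (p.1 ∩ p.2) ℓcap ∧ qIs t (p.1 ∪ p.2) ℓ ∧ ({⟨0, by omega⟩, ⟨t - 1, by omega⟩} : Finset (Fin t)) ∩ p.1 = ∅ ∧ ({⟨0, by omega⟩, ⟨t - 1, by omega⟩} : Finset (Fin t)) ∩ p.2 = ({⟨t - 1, by omega⟩} : Finset (Fin t)) })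
    (hS5 : S5 = { p : Finset (Fin t) × Finset (Fin t) | p.1.card = j' ∧ j' < t ∧ p.2.card = j'' ∧ j'' < t ∧ (p.1 ∩ p.2).card = j ∧ 0 < j ∧ j' < (p.1 ∪ p.2).card ∧ j'' < (p.1 ∪ p.2).card ∧ (p.1 ∪ p.2).card < t ∧ qIs t (p.1 \ p.2) ℓ' ∧ qIs t (p.2 \ p.1) ℓ'' ∧ qIs t (p.1 ∩ p.2) ℓcap ∧ qIs t (p.1 ∪ p.2) ℓ ∧ ({⟨0, by omega⟩, ⟨t - 1, by omega⟩} : Finset (Fin t)) ∩ p.1 = ({⟨t - 1, by omega⟩} : Finset (Fin t)) ∧ ({⟨0, by omega⟩, ⟨t - 1, by omega⟩} : Finset (Fin t)) ∩ p.2 = ({⟨t - 1, by omega⟩} : Finset (Fin t)) })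
    : S1.ncard = Fr 1 1 ((ℓ - 1) / 2) ((ℓ' + 1) / 2) ((ℓ'' - 1) / 2) ((ℓcap - 1) / 2) * comp ((ℓ - 1) / 2) ((t : ℤ) - ((j' : ℤ) + (j'' : ℤ) - (j : ℤ))) * comp ((ℓ' + 1) / 2) ((j' : ℤ) - (j : ℤ)) * comp ((ℓ'' - 1) / 2) ((j'' : ℤ) - (j : ℤ)) * comp ((ℓcap - 1) / 2) ((j : ℤ)) ∧
      S2.ncard = Fr 1 3 ((ℓ - 1) / 2) ((ℓ' + 1) / 2) ((ℓ'' - 1) / 2) ((ℓcap + 1) / 2) * comp ((ℓ - 1) / 2) ((t : ℤ) - ((j' : ℤ) + (j'' : ℤ) - (j : ℤ))) * comp ((ℓ' + 1) / 2) ((j' : ℤ) - (j : ℤ)) * comp ((ℓ'' - 1) / 2) ((j'' : ℤ) - (j : ℤ)) * comp ((ℓcap + 1) / 2) ((j : ℤ)) ∧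
      S3.ncard = Fr 0 0 ((ℓ + 1) / 2) ((ℓ' - 1) / 2) ((ℓ'' - 1) / 2) ((ℓcap - 1) / 2) * comp ((ℓ + 1) / 2) ((t : ℤ) - ((j' : ℤ) + (j'' : ℤ) - (j : ℤ))) * comp ((ℓ' - 1) / 2) ((j' : ℤ) - (j : ℤ)) * comp ((ℓ'' - 1) / 2) ((j'' : ℤ) - (j : ℤ)) * comp ((ℓcap - 1) / 2) ((j : ℤ)) ∧
      S4.ncard = Fr 0 2 ((ℓ + 1) / 2) ((ℓ' - 1) / 2) ((ℓ'' + 1) / 2) ((ℓcap - 1) / 2) * comp ((ℓ + 1) / 2) ((t : ℤ) - ((j' : ℤ) + (j'' : ℤ) - (j : ℤ))) * comp ((ℓ' - 1) / 2) ((j' : ℤ) - (j : ℤ)) * comp ((ℓ'' + 1) / 2) ((j'' : ℤ) - (j : ℤ)) * comp ((ℓcap - 1) / 2) ((j : ℤ)) ∧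
      S5.ncard = Fr 0 3 ((ℓ + 1) / 2) ((ℓ' - 1) / 2) ((ℓ'' - 1) / 2) ((ℓcap + 1) / 2) * comp ((ℓ + 1) / 2) ((t : ℤ) - ((j' : ℤ) + (j'' : ℤ) - (j : ℤ))) * comp ((ℓ' - 1) / 2) ((j' : ℤ) - (j : ℤ)) * comp ((ℓ'' - 1) / 2) ((j'' : ℤ) - (j : ℤ)) * comp ((ℓcap + 1) / 2) ((j : ℤ)) := by
  obtain ⟨n, rfl⟩ : ∃ n, t = n + 1 := ⟨t - 1, by omega⟩
  have hne : (⟨0, by omega⟩ : Fin (n + 1)) ≠ ⟨n + 1 - 1, by omega⟩ :=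
    Fin.ne_of_val_ne (by simp only; omega)
  subst hS1 hS2 hS3 hS4 hS5
  refine ⟨ncard_setOf_pair_eq_Fr_mul_comp 1 1 hodd' hodd'' hoddc hoddl fun p => ?_,
    ncard_setOf_pair_eq_Fr_mul_comp 1 3 hodd' hodd'' hoddc hoddl fun p => ?_,
    ncard_setOf_pair_eq_Fr_mul_comp 0 0 hodd' hodd'' hoddc hoddl fun p => ?_,
    ncard_setOf_pair_eq_Fr_mul_comp 0 2 hodd' hodd'' hoddc hoddl fun p => ?_,
    ncard_setOf_pair_eq_Fr_mul_comp 0 3 hodd' hodd'' hoddc hoddl fun p => ?_⟩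
  · rw [pair_inter_eq_pair_iff, pair_inter_eq_empty_iff, letterOf_eq_one, letterOf_eq_one]
    exact and_and_and_comm
  · rw [pair_inter_eq_pair_iff, pair_inter_eq_singleton_iff hne, letterOf_eq_one,
      letterOf_eq_three]
    exact and_and_and_comm
  · rw [pair_inter_eq_empty_iff, pair_inter_eq_empty_iff, letterOf_eq_zero, letterOf_eq_zero]
    exact and_and_and_comm
  · rw [pair_inter_eq_empty_iff, pair_inter_eq_singleton_iff hne, letterOf_eq_zero,
      letterOf_eq_two]
    exact and_and_and_comm
  · rw [pair_inter_eq_singleton_iff hne, pair_inter_eq_singleton_iff hne, letterOf_eq_zero,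
      letterOf_eq_three]
    exact and_and_and_comm
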